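/- arXiv:0803.4079 — 3 statements merged into one kernel-verified Lean document; each statement's English description precedes it below -/
import Mathlib

section
/- For every integer n ≥ 2, the group (ℤ/2ℤ)^n is sequentially ternary if and only if n is neither 3 nor 4. -/
def SeqTernary (n : ℕ) : Prop :=
  ∃ v : ℕ → (Fin n → ZMod 2),
    Set.BijOn v (Set.Icc 1 (2 ^ n - 1)) {x | x ≠ 0} ∧
    ∀ i : ℕ, 2 ≤ i → i ≤ 2 ^ n - 2 → Even i → v (i - 1) + v i + v (i + 1) = 0

/-! ### Impossibility for `n = 3, 4` : exhaustive search -/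

/-- Exhaustive search for an extension of a partial ternary path by `k` further lines. -/
def tsearch (N : ℕ) : ℕ → List ℕ → ℕ → Bool
  | 0, _, _ => true
  | k + 1, used, last => (List.range N).any fun c =>
      !used.contains c && (!used.contains (c ^^^ last) &&
        tsearch N k (c :: (c ^^^ last) :: used) c)

theorem tsearch_sound (N M : ℕ) (f : ℕ → ℕ) (hlt : ∀ i, f i < N)
    (hinj : ∀ i j, 1 ≤ i → i ≤ M → 1 ≤ j → j ≤ M → f i = f j → i = j)
    (hx : ∀ i, 2 ≤ i → i + 1 ≤ M → Even i → f i = f (i + 1) ^^^ f (i - 1)) :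
    ∀ (k j : ℕ) (used : List ℕ), 2 * (j + k) + 1 ≤ M →
      (∀ i, 2 * j + 1 < i → i ≤ M → f i ∉ used) →
      tsearch N k used (f (2 * j + 1)) = true := by
  intro k
  induction k with
  | zero => intros; rfl
  | succ k ih =>
    intro j used hM hu
    have e : f (2 * j + 2) = f (2 * j + 3) ^^^ f (2 * j + 1) := by
      have := hx (2 * j + 2) (by omega) (by omega) ⟨j + 1, by ring⟩
      simpa using this
    simp only [tsearch, List.any_eq_true]
    refine ⟨f (2 * j + 3), List.mem_range.2 (hlt _), ?_⟩
    have h1 := hu (2 * j + 3) (by omega) (by omega)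
    have h2 := hu (2 * j + 2) (by omega) (by omega)
    rw [← e]
    have h3 := ih (j + 1) (f (2 * j + 3) :: f (2 * j + 2) :: used) (by omega) (by
      intro i hi hiM
      simp only [List.mem_cons, not_or]
      refine ⟨fun h => ?_, fun h => ?_, hu i (by omega) hiM⟩
      · have := hinj _ _ (by omega) hiM (by omega) (by omega) h; omega
      · have := hinj _ _ (by omega) hiM (by omega) (by omega) h; omega)
    have h4 : 2 * (j + 1) + 1 = 2 * j + 3 := by ring
    rw [h4] at h3
    simp [h1, h2, h3]

def enc3 (x : Fin 3 → ZMod 2) : ℕ := (x 0).val + 2 * (x 1).val + 4 * (x 2).val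
def enc4 (x : Fin 4 → ZMod 2) : ℕ :=
  (x 0).val + 2 * (x 1).val + 4 * (x 2).val + 8 * (x 3).val

theorem enc3_inj : ∀ x y, enc3 x = enc3 y → x = y := by decide +kernel
theorem enc3_add : ∀ x y, enc3 (x + y) = enc3 x ^^^ enc3 y := by decide +kernel
theorem enc3_lt : ∀ x, enc3 x < 8 := by decide +kernel
theorem enc3_ne : ∀ x, x ≠ 0 → enc3 x ≠ 0 := by decide +kernel
theorem enc4_inj : ∀ x y, enc4 x = enc4 y → x = y := by decide +kernel
theorem enc4_add : ∀ x y, enc4 (x + y) = enc4 x ^^^ enc4 y := by decide +kernel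
theorem enc4_lt : ∀ x, enc4 x < 16 := by decide +kernel
theorem enc4_ne : ∀ x, x ≠ 0 → enc4 x ≠ 0 := by decide +kernel

theorem search3 : ∀ c, c < 8 → c ≠ 0 → tsearch 8 3 [c, 0] c = false := by decide +kernel
theorem search4 : tsearch 16 5 [4, 6, 2, 3, 1, 0] 4 = false := by decide +kernel

theorem z2_mid {n : ℕ} {a b c : Fin n → ZMod 2} (h : a + b + c = 0) : b = c + a := by
  funext i
  have := congrFun h i
  simp only [Pi.add_apply, Pi.zero_apply] at this ⊢
  generalize a i = p at *
  generalize b i = q at *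
  generalize c i = r at *
  revert this; revert p q r; decide

theorem not_three : ¬ SeqTernary 3 := by
  rintro ⟨v, hb, ht⟩
  have hne : ∀ i, 1 ≤ i → i ≤ 7 → v i ≠ 0 := fun i h1 h2 => hb.1 ⟨h1, by norm_num; exact h2⟩
  have := tsearch_sound 8 7 (fun i => enc3 (v i)) (fun i => enc3_lt _)
    (fun i j h1 h2 h3 h4 h => hb.2.1 ⟨h1, by norm_num; exact h2⟩ ⟨h3, by norm_num; exact h4⟩
      (enc3_inj _ _ h))
    (fun i h1 h2 h3 => by
      rw [← enc3_add, ← z2_mid (ht i h1 (by norm_num; omega) h3)])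
    3 0 [enc3 (v 1), 0] (by norm_num) (by
      intro i h1 h2
      simp only [List.mem_cons, List.not_mem_nil, or_false, not_or]
      refine ⟨fun h => ?_, enc3_ne _ (hne i (by omega) h2)⟩
      have := hb.2.1 ⟨by omega, by norm_num; exact h2⟩ ⟨le_rfl, by norm_num⟩ (enc3_inj _ _ h)
      omega)
  have h2 := search3 _ (enc3_lt (v 1)) (enc3_ne _ (hne 1 le_rfl (by norm_num)))
  simp [h2] at this

theorem z2_lin : ∀ c : ZMod 2, c = 0 ∨ c = 1 := by decide

theorem not_four : ¬ SeqTernary 4 := by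
  rintro ⟨v, hb, ht⟩
  have hne : ∀ i, 1 ≤ i → i ≤ 15 → v i ≠ 0 := fun i h1 h2 => hb.1 ⟨h1, by norm_num; exact h2⟩
  have hinj : ∀ i j, 1 ≤ i → i ≤ 15 → 1 ≤ j → j ≤ 15 → v i = v j → i = j :=
    fun i j h1 h2 h3 h4 h =>
      hb.2.1 ⟨h1, by norm_num; exact h2⟩ ⟨h3, by norm_num; exact h4⟩ h
  have e2 : v 2 = v 3 + v 1 := z2_mid (ht 2 (by norm_num) (by norm_num) (by decide))
  have e4 : v 4 = v 5 + v 3 := z2_mid (ht 4 (by norm_num) (by norm_num) (by decide))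
  have hdup : ∀ x y : Fin 4 → ZMod 2, x + y = 0 → x = y := by decide +kernel
  have hli : LinearIndependent (ZMod 2) ![v 1, v 3, v 5] := by
    rw [Fintype.linearIndependent_iff]
    intro g hg
    simp only [Fin.sum_univ_three, Matrix.cons_val] at hg
    have n1 := hne 1 (by norm_num) (by norm_num)
    have n2 := hne 2 (by norm_num) (by norm_num)
    have n3 := hne 3 (by norm_num) (by norm_num)
    have n4 := hne 4 (by norm_num) (by norm_num)
    have n5 := hne 5 (by norm_num) (by norm_num)
    have d15 : v 1 ≠ v 5 := fun h => absurd (hinj 1 5 (by norm_num) (by norm_num) (by norm_num) (by norm_num) h) (by norm_num)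
    have d25 : v 2 ≠ v 5 := fun h => absurd (hinj 2 5 (by norm_num) (by norm_num) (by norm_num) (by norm_num) h) (by norm_num)
    rcases z2_lin (g 0) with h0 | h0 <;> rcases z2_lin (g 1) with h1 | h1 <;>
      rcases z2_lin (g 2) with h2 | h2 <;>
      simp only [h0, h1, h2, zero_smul, one_smul, zero_add, add_zero] at hg
    · intro i; fin_cases i <;> assumption
    · exact absurd hg n5
    · exact absurd hg n3
    · exact absurd (by rw [e4, add_comm]; exact hg) n4
    · exact absurd hg n1
    · exact absurd (hdup _ _ hg) d15
    · exact absurd (by rw [e2, add_comm]; exact hg) n2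
    · exact absurd (by rw [e2, add_comm (v 3)]; exact hdup _ _ hg) d25
  obtain ⟨w, hw⟩ := exists_linearIndependent_snoc_of_lt_finrank hli (by simp)
  let B := basisOfLinearIndependentOfCardEqFinrank hw (by simp)
  have hB : ⇑B = Fin.snoc ![v 1, v 3, v 5] w := by simp [B]
  have b0 : enc4 (B.equivFun (v 1)) = 1 := by
    have h : B.equivFun (v 1) = fun j => if (0 : Fin 4) = j then 1 else 0 := by
      funext j
      rw [← B.equivFun_self, hB]; rfl
    rw [h]; decide
  have b1 : enc4 (B.equivFun (v 3)) = 2 := by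
    have h : B.equivFun (v 3) = fun j => if (1 : Fin 4) = j then 1 else 0 := by
      funext j
      rw [← B.equivFun_self, hB]; rfl
    rw [h]; decide
  have b2 : enc4 (B.equivFun (v 5)) = 4 := by
    have h : B.equivFun (v 5) = fun j => if (2 : Fin 4) = j then 1 else 0 := by
      funext j
      rw [← B.equivFun_self, hB]; rfl
    rw [h]; decide
  have c2 : enc4 (B.equivFun (v 2)) = 3 := by
    rw [e2, map_add, enc4_add, b0, b1]; rfl
  have c4 : enc4 (B.equivFun (v 4)) = 6 := by
    rw [e4, map_add, enc4_add, b1, b2]; rfl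
  have hfinj : ∀ i j, 1 ≤ i → i ≤ 15 → 1 ≤ j → j ≤ 15 →
      enc4 (B.equivFun (v i)) = enc4 (B.equivFun (v j)) → i = j :=
    fun i j h1 h2 h3 h4 h => hinj i j h1 h2 h3 h4 (B.equivFun.injective (enc4_inj _ _ h))
  have := tsearch_sound 16 15 (fun i => enc4 (B.equivFun (v i))) (fun i => enc4_lt _)
    hfinj
    (fun i h1 h2 h3 => by
      rw [← enc4_add, ← map_add, ← z2_mid (ht i h1 (by norm_num; omega) h3)])
    5 2 [4, 6, 2, 3, 1, 0] (by norm_num) (by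
      intro i h1 h2
      simp only [List.mem_cons, List.not_mem_nil, or_false, not_or]
      refine ⟨fun h => ?_, fun h => ?_, fun h => ?_, fun h => ?_, fun h => ?_,
        enc4_ne _ (by simpa using hne i (by omega) h2)⟩
      · have := hfinj _ 5 (by omega) h2 (by norm_num) (by norm_num) (h.trans b2.symm); omega
      · have := hfinj _ 4 (by omega) h2 (by norm_num) (by norm_num) (h.trans c4.symm); omega
      · have := hfinj _ 3 (by omega) h2 (by norm_num) (by norm_num) (h.trans b1.symm); omega
      · have := hfinj _ 2 (by omega) h2 (by norm_num) (by norm_num) (h.trans c2.symm); omega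
      · have := hfinj _ 1 (by omega) h2 (by norm_num) (by norm_num) (h.trans b0.symm); omega)
  simp only [Nat.reduceMul, Nat.reduceAdd, b2, search4] at this
  exact absurd this (by decide)

/-! ### Ternary paths as lists -/

/-- `TP x y L`: `L` is a list `x = v₁, …, v_{2k+1} = y` with `v_{i-1} + v_i + v_{i+1} = 0`
for the even `i`. -/
inductive TP {V : Type} [AddCommGroup V] : V → V → List V → Prop
  | single (x : V) : TP x x [x]
  | cons (x b z y : V) (l : List V) : x + b + z = 0 → TP z y l → TP x y (x :: b :: l)

theorem TP.append {V : Type} [AddCommGroup V] {x y z w : V} {l l' : List V} (b : V)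
    (h : TP x y l) (hb : y + b + z = 0) (h' : TP z w l') : TP x w (l ++ b :: l') := by
  induction h with
  | single x => exact TP.cons _ _ _ _ _ hb h'
  | cons x c u y l hc _ ih => exact TP.cons _ _ _ _ _ hc (ih hb)

theorem TP.reverse {V : Type} [AddCommGroup V] {x y : V} {l : List V}
    (h : TP x y l) : TP y x l.reverse := by
  induction h with
  | single x => exact TP.single x
  | cons x c u y l hc _ ih =>
    have := ih.append c (z := x) (by rw [← hc]; abel) (TP.single x)
    simpa using this

theorem TP.map {V W : Type} [AddCommGroup V] [AddCommGroup W] (f : V →+ W) {x y : V} {l : List V}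
    (h : TP x y l) : TP (f x) (f y) (l.map f) := by
  induction h with
  | single x => exact TP.single _
  | cons x c u y l hc _ ih =>
    exact TP.cons _ _ _ _ _ (by rw [← map_add, ← map_add, hc, map_zero]) ih

theorem TP.getD {V : Type} [AddCommGroup V] {x y : V} {l : List V}
    (h : TP x y l) : l.getD 0 0 = x ∧
      ∀ j, 2 * j + 2 < l.length →
        l.getD (2 * j) 0 + l.getD (2 * j + 1) 0 + l.getD (2 * j + 2) 0 = 0 := by
  induction h with
  | single x => exact ⟨rfl, fun j hj => by simp at hj⟩
  | cons x c u y l hc _ ih =>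
    refine ⟨rfl, fun j hj => ?_⟩
    rcases j with _ | j
    · have := ih.1
      simp only [List.getD_cons_zero, List.getD_cons_succ, this, Nat.mul_zero, Nat.zero_add]
      exact hc
    · have := ih.2 j (by simp at hj; omega)
      exact this

/-- A ternary path of length `N - 1` through all the nonzero elements. -/
def HP (V : Type) [AddCommGroup V] (N : ℕ) : Prop :=
  ∃ (x y : V) (L : List V), TP x y L ∧ L.length + 1 = N ∧ ∀ z, z ≠ 0 → z ∈ L

theorem HP.seqTernary {n : ℕ} (h : HP (Fin n → ZMod 2) (2 ^ n)) : SeqTernary n := by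
  obtain ⟨x, y, L, hT, hlen, hm⟩ := h
  have hcard : (Finset.univ.erase (0 : Fin n → ZMod 2)).card = L.length := by
    rw [Finset.card_erase_of_mem (Finset.mem_univ _), Finset.card_univ]
    simp [ZMod.card]; omega
  have hsub : Finset.univ.erase (0 : Fin n → ZMod 2) ⊆ L.toFinset := by
    intro z hz
    simpa using hm z (by simpa using hz)
  have heq : Finset.univ.erase (0 : Fin n → ZMod 2) = L.toFinset :=
    Finset.eq_of_subset_of_card_le hsub (by rw [hcard]; exact L.toFinset_card_le)
  have hnd : L.Nodup := by
    rw [← Multiset.coe_nodup, ← Multiset.toFinset_card_eq_card_iff_nodup]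
    change L.toFinset.card = L.length
    rw [← heq, hcard]
  have h0 : ∀ z ∈ L, z ≠ 0 := by
    intro z hz
    have : z ∈ L.toFinset := by simpa using hz
    rw [← heq] at this
    simpa using this
  refine ⟨fun i => L.getD (i - 1) 0, ⟨?_, ?_, ?_⟩, ?_⟩
  · rintro i ⟨h1, h2⟩
    have hi : i - 1 < L.length := by omega
    simp only [List.getD_eq_getElem _ _ hi]
    exact h0 _ (List.getElem_mem hi)
  · rintro i ⟨h1, h2⟩ j ⟨h3, h4⟩ hij
    have hi : i - 1 < L.length := by omega
    have hj : j - 1 < L.length := by omega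
    simp only [List.getD_eq_getElem _ _ hi, List.getD_eq_getElem _ _ hj] at hij
    have := (hnd.getElem_inj_iff).1 hij
    omega
  · intro z hz
    obtain ⟨k, hk, rfl⟩ := List.getElem_of_mem (hm z hz)
    refine ⟨k + 1, ⟨by omega, by omega⟩, ?_⟩
    simp [hk]
  · rintro i h1 h2 ⟨r, hr⟩
    have := hT.getD.2 (r - 1) (by omega)
    have e1 : 2 * (r - 1) = i - 1 - 1 := by omega
    have e2 : 2 * (r - 1) + 1 = i - 1 := by omega
    have e3 : 2 * (r - 1) + 2 = i + 1 - 1 := by omega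
    rw [e2, e3, e1] at this
    exact this

/-! ### The induction step `n → n + 2` -/

abbrev KK := ZMod 2 × ZMod 2

/-- Multiplication by a generator of the field with four elements. -/
def om (t : KK) : KK := (t.2, t.1 + t.2)

/-- The lift of a path, with alternating multipliers `α`, `β`. -/
def plift {V : Type} (α β : KK → KK) (t : KK) : List V → List (V × KK)
  | [] => []
  | [x] => [(x, α t)]
  | x :: b :: l => (x, α t) :: (b, α t + β t) :: plift β α t l

theorem plift_length {V : Type} (t : KK) : ∀ (l : List V) (α β : KK → KK),
    (plift α β t l).length = l.length
  | [], _, _ => rfl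
  | [_], _, _ => rfl
  | x :: b :: l, α, β => by simp [plift, plift_length t l β α]

theorem plift_mem {V : Type} (p : V) (c : KK) : ∀ (l : List V) (α β : KK → KK),
    α.Surjective → β.Surjective → (fun t => α t + β t).Surjective → p ∈ l →
    ∃ t, (p, c) ∈ plift α β t l
  | [], _, _, _, _, _, h => by simp at h
  | [x], α, β, h1, h2, h3, h => by
    obtain ⟨t, rfl⟩ := h1 c
    exact ⟨t, by simpa [plift] using h⟩
  | x :: b :: l, α, β, h1, h2, h3, h => by
    simp only [List.mem_cons] at h
    rcases h with rfl | rfl | h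
    · obtain ⟨t, rfl⟩ := h1 c
      exact ⟨t, by simp [plift]⟩
    · obtain ⟨t, rfl⟩ := h3 c
      exact ⟨t, by simp [plift]⟩
    · obtain ⟨t, ht⟩ := plift_mem p c l β α h2 h1 (by simpa only [add_comm] using h3) h
      exact ⟨t, by simp [plift, ht]⟩

theorem kk_line : ∀ a b : KK, a + (a + b) + b = 0 := by decide

theorem plift_TP {V : Type} [AddCommGroup V] (t : KK) {x y : V} {l : List V} (h : TP x y l) :
    ∀ α β : KK → KK,
      (l.length % 4 = 1 → TP (x, α t) (y, α t) (plift α β t l)) ∧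
      (l.length % 4 = 3 → TP (x, α t) (y, β t) (plift α β t l)) := by
  induction h with
  | single x => exact fun α β => ⟨fun _ => TP.single _, fun h => by simp at h⟩
  | cons x b z y l hb _ ih =>
    intro α β
    have hl : ((x, α t) : V × KK) + (b, α t + β t) + (z, β t) = 0 := by
      rw [Prod.mk_add_mk, Prod.mk_add_mk, hb, kk_line]; rfl
    refine ⟨fun h => ?_, fun h => ?_⟩
    · exact TP.cons _ _ _ _ _ hl ((ih β α).2 (by simp at h; omega))
    · exact TP.cons _ _ _ _ _ hl ((ih β α).1 (by simp at h; omega))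

theorem HP.step {V : Type} [AddCommGroup V] (h2 : ∀ x : V, x + x = 0) {N : ℕ}
    (hN : N % 4 = 0) (hN8 : 8 ≤ N) (h : HP V N) : HP (V × KK) (4 * N) := by
  obtain ⟨x, y, L, hT, hlen, hm⟩ := h
  rcases hT with _ | ⟨_, b, z, _, l, hb, hT⟩
  · simp at hlen; omega
  rcases hT with _ | ⟨_, b', w, _, l, hb', hT⟩
  · simp at hlen; omega
  simp only [List.length_cons] at hlen
  -- the common part
  let R : KK → List (V × KK) := fun t =>
    (z, om t) :: (b', om t + om (om t)) :: plift (fun t => om (om t)) id t l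
  have hR : ∀ t, TP (z, om t) (y, t) (R t) := by
    intro t
    refine TP.cons _ _ (w, om (om t)) _ _ ?_ ((plift_TP t hT (fun t => om (om t)) id).2 (by omega))
    rw [Prod.mk_add_mk, Prod.mk_add_mk, hb', kk_line]; rfl
  let P : KK → List (V × KK) := fun t => (x, t) :: (b, t + om t) :: R t
  let Q : KK → List (V × KK) := fun t => (b, t + om t) :: (x, t) :: R t
  have hP : ∀ t, TP (x, t) (y, t) (P t) := by
    intro t
    refine TP.cons _ _ _ _ _ ?_ (hR t)
    rw [Prod.mk_add_mk, Prod.mk_add_mk, hb, kk_line]; rfl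
  have hQ : ∀ t, TP (b, t + om t) (y, t) (Q t) := by
    intro t
    refine TP.cons _ _ _ _ _ ?_ (hR t)
    rw [Prod.mk_add_mk, Prod.mk_add_mk, add_comm b x, hb, add_comm (t + om t) t, kk_line]; rfl
  have hlP : ∀ t, (P t).length = N - 1 := by
    intro t; simp [P, R, plift_length]; omega
  have hlQ : ∀ t, (Q t).length = N - 1 := by
    intro t; simp [Q, R, plift_length]; omega
  have hPQ : ∀ t q, q ∈ P t → q ∈ Q t := by
    intro t q h
    simp only [P, Q, List.mem_cons] at h ⊢
    tauto
  have hcov : ∀ p c, p ≠ 0 → ∃ t, (p, c) ∈ P t := by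
    intro p c hp
    have s1 : om.Surjective := by unfold Function.Surjective; decide
    have s2 : (fun t => om (om t)).Surjective := by unfold Function.Surjective; decide
    have s3 : (fun t => t + om t).Surjective := by unfold Function.Surjective; decide
    have s4 : (fun t => om t + om (om t)).Surjective := by unfold Function.Surjective; decide
    have s5 : (fun t => om (om t) + id t).Surjective := by unfold Function.Surjective; decide
    have := hm p hp
    simp only [List.mem_cons] at this
    rcases this with rfl | rfl | rfl | rfl | h
    · exact ⟨c, by simp [P]⟩
    · obtain ⟨t, rfl⟩ := s3 c
      exact ⟨t, by simp [P]⟩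
    · obtain ⟨t, rfl⟩ := s1 c
      exact ⟨t, by simp [P, R]⟩
    · obtain ⟨t, rfl⟩ := s4 c
      exact ⟨t, by simp [P, R]⟩
    · obtain ⟨t, ht⟩ := plift_mem p c l _ _ s2 Function.surjective_id s5 h
      exact ⟨t, by simp [P, R, ht]⟩
  have hj : ∀ (u : V) (a c d : KK), a + c + d = 0 → ((u, a) : V × KK) + (0, c) + (u, d) = 0 := by
    intro u a c d h
    rw [Prod.mk_add_mk, Prod.mk_add_mk, h, add_zero, h2]; rfl
  refine ⟨(y, (0, 0)), (y, (0, 1)), (P (0, 0)).reverse ++ (0, (1, 0)) :: (P (1, 0) ++ (0, (0, 1)) ::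
    ((Q (1, 1)).reverse ++ (0, (1, 1)) :: Q (0, 1))), ?_, ?_, ?_⟩
  · refine (hP _).reverse.append _ (hj x _ _ _ ?_) ((hP _).append _ (hj y _ _ _ ?_)
      ((hQ _).reverse.append _ (hj b _ _ _ ?_) (hQ _))) <;> decide
  · simp only [List.length_append, List.length_reverse, List.length_cons, hlP, hlQ]; omega
  · rintro ⟨p, c⟩ hpc
    have hz : ∀ c : KK, c = (0, 0) ∨ c = (1, 0) ∨ c = (0, 1) ∨ c = (1, 1) := by decide
    simp only [List.mem_append, List.mem_cons, List.mem_reverse]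
    by_cases hp : p = 0
    · subst hp
      rcases hz c with rfl | rfl | rfl | rfl
      · exact absurd rfl hpc
      all_goals tauto
    · obtain ⟨t, ht⟩ := hcov p c hp
      have ht' := hPQ _ _ ht
      rcases hz t with rfl | rfl | rfl | rfl <;> tauto

/-- Adjoining two coordinates. -/
def addTwo (n : ℕ) : (Fin n → ZMod 2) × KK →+ (Fin (n + 2) → ZMod 2) where
  toFun p := Matrix.vecCons p.2.1 (Matrix.vecCons p.2.2 p.1)
  map_zero' := by simp
  map_add' p q := by simp

theorem HP.succ_succ {n : ℕ} (hn : 3 ≤ n) (h : HP (Fin n → ZMod 2) (2 ^ n)) :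
    HP (Fin (n + 2) → ZMod 2) (2 ^ (n + 2)) := by
  obtain ⟨k, rfl⟩ := Nat.exists_eq_add_of_le hn
  have e : 2 ^ (3 + k) = 8 * 2 ^ k := by rw [pow_add]; norm_num
  have hk : 1 ≤ 2 ^ k := Nat.one_le_two_pow
  obtain ⟨x, y, L, hT, hlen, hm⟩ := h.step
    (fun x => by funext i; simp [CharTwo.add_self_eq_zero]) (by omega) (by omega)
  refine ⟨_, _, _, hT.map (addTwo _), ?_, fun z hz => ?_⟩
  · rw [List.length_map, hlen, pow_add 2 (3 + k) 2]; ring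
  · rw [List.mem_map]
    have hz' : addTwo (3 + k) (Matrix.vecTail (Matrix.vecTail z), (z 0, z 1)) = z := by
      funext i
      refine Fin.cases rfl (fun i => ?_) i
      refine Fin.cases rfl (fun i => rfl) i
    refine ⟨_, hm _ ?_, hz'⟩
    rintro h0
    rw [h0, map_zero] at hz'
    exact hz hz'.symm

/-! ### Base cases -/

def dec (n m : ℕ) : Fin n → ZMod 2 := fun i => if m.testBit i then 1 else 0

/-- Boolean check of the path condition. -/
def tcheck {V : Type} [AddCommGroup V] [DecidableEq V] : List V → Bool
  | [] => false
  | [_] => true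
  | [_, _] => false
  | x :: b :: z :: l => decide (x + b + z = 0) && tcheck (z :: l)

theorem tcheck_sound {V : Type} [AddCommGroup V] [DecidableEq V] : ∀ (l : List V) (x : V),
    tcheck (x :: l) = true → ∃ y, TP x y (x :: l)
  | [], x, _ => ⟨x, TP.single x⟩
  | [_], _, h => by simp [tcheck] at h
  | b :: z :: l, x, h => by
    simp only [tcheck, Bool.and_eq_true, decide_eq_true_eq] at h
    obtain ⟨y, hy⟩ := tcheck_sound l z h.2
    exact ⟨y, TP.cons _ _ _ _ _ h.1 hy⟩

theorem HP.of_check {n : ℕ} (x : ℕ) (l : List ℕ) (h1 : tcheck ((x :: l).map (dec n)) = true)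
    (h2 : l.length + 2 = 2 ^ n) (h3 : ∀ z, z ≠ 0 → z ∈ (x :: l).map (dec n)) :
    HP (Fin n → ZMod 2) (2 ^ n) := by
  obtain ⟨y, hy⟩ := tcheck_sound (l.map (dec n)) (dec n x) (by simpa using h1)
  exact ⟨_, y, _, hy, by simpa using h2, by simpa using h3⟩

theorem hp2 : HP (Fin 2 → ZMod 2) (2 ^ 2) :=
  HP.of_check 1 [2, 3] (by decide +kernel) (by norm_num) (by decide +kernel)

theorem hp5 : HP (Fin 5 → ZMod 2) (2 ^ 5) :=
  HP.of_check 1 [29, 28, 24, 4, 26, 30, 25, 7, 18, 21, 22, 3, 10, 9, 15, 6, 14, 8, 13, 5, 20, 17,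
    2, 19, 31, 12, 23, 27, 16, 11] (by decide +kernel) (by norm_num) (by decide +kernel)

theorem hp6 : HP (Fin 6 → ZMod 2) (2 ^ 6) :=
  HP.of_check 1 [55, 54, 52, 2, 22, 20, 47, 59, 63, 4, 9, 13, 19, 30, 44, 50, 31, 45, 37, 8, 29,
    21, 49, 36, 61, 25, 11, 18, 5, 23, 34, 53, 15, 58, 42, 16, 51, 35, 3, 32, 28, 60, 26, 38, 14,
    40, 48, 24, 33, 57, 62, 7, 46, 41, 56, 17, 27, 10, 6, 12, 43, 39]
    (by decide +kernel) (by norm_num) (by decide +kernel)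

theorem hp_all (k : ℕ) : HP (Fin (k + 5) → ZMod 2) (2 ^ (k + 5)) := by
  induction k using Nat.twoStepInduction with
  | zero => exact hp5
  | one => exact hp6
  | more k ih _ => exact HP.succ_succ (by omega) ih

theorem stmt12 (n : ℕ) (hn : 2 ≤ n) : SeqTernary n ↔ (n ≠ 3 ∧ n ≠ 4) := by
  constructor
  · intro h
    exact ⟨fun e => not_three (e ▸ h), fun e => not_four (e ▸ h)⟩
  · rintro ⟨h3, h4⟩
    by_cases h : n = 2
    · subst h; exact hp2.seqTernary
    · obtain ⟨k, rfl⟩ := Nat.exists_eq_add_of_le' (show 5 ≤ n by omega)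
      exact (hp_all k).seqTernary
end

section
/- For any integers n ≥ 5 with n odd, (ℤ/2ℤ)^n is sequentially ternary. -/
/-- Odd-length lists whose consecutive (overlapping) triples sum to zero. -/
inductive TPath {G : Type} [AddCommGroup G] : List G → Prop
  | single (x : G) : TPath [x]
  | cons (x y z : G) (r : List G) : x + y + z = 0 → TPath (z :: r) → TPath (x :: y :: z :: r)

theorem TPath.join {G : Type} [AddCommGroup G] {A B : List G} (hA : TPath A) (hB : TPath B)
    {x y z : G} (hx : A.getLast? = some x) (hz : B.head? = some z) (h : x + y + z = 0) :
    TPath (A ++ y :: B) := by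
  induction hA with
  | single u =>
    obtain ⟨r, rfl⟩ : ∃ r, B = z :: r := by
      cases B with
      | nil => simp at hz
      | cons b r => simp at hz; exact ⟨r, by rw [hz]⟩
    simp at hx
    subst hx
    exact TPath.cons _ _ _ _ h hB
  | cons u v w r h1 _ ih =>
    refine TPath.cons _ _ _ _ h1 (ih ?_)
    simpa using hx

theorem TPath.reverse {G : Type} [AddCommGroup G] {A : List G} (hA : TPath A) :
    TPath A.reverse := by
  induction hA with
  | single u => exact TPath.single u
  | cons u v w r h1 _ ih =>
    have := ih.join (TPath.single u) (x := w) (y := v) (z := u) (by simp) rfl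
      (by rw [← h1]; abel)
    simpa using this

theorem TPath.map {G H : Type} [AddCommGroup G] [AddCommGroup H] (f : G →+ H) {A : List G}
    (hA : TPath A) : TPath (A.map f) := by
  induction hA with
  | single u => exact TPath.single _
  | cons u v w r h1 _ ih =>
    refine TPath.cons _ _ _ _ ?_ ih
    rw [← map_add, ← map_add, h1, map_zero]

theorem TPath.get {G : Type} [AddCommGroup G] {A : List G} (hA : TPath A) :
    ∀ k, 2 * k + 2 < A.length →
      A.getD (2 * k) 0 + A.getD (2 * k + 1) 0 + A.getD (2 * k + 2) 0 = 0 := by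
  induction hA with
  | single u => intro k hk; simp at hk
  | cons u v w r h1 _ ih =>
    intro k hk
    cases k with
    | zero => simpa using h1
    | succ k =>
      have := ih k (by simp at hk ⊢; omega)
      simpa [Nat.mul_succ] using this

/-- The four-element group. -/
abbrev K4 := ZMod 2 × ZMod 2

/-- Multiplication by a generator of the multiplicative group of the field with four elements. -/
def rot (c : K4) : K4 := (c.2, c.1 + c.2)

def liftL {V : Type} : K4 → List V → List (K4 × V)
  | _, [] => []
  | c, x :: r => (c, x) :: liftL (rot c) r

theorem liftL_length {V : Type} (c : K4) (L : List V) : (liftL c L).length = L.length := by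
  induction L generalizing c with
  | nil => rfl
  | cons x r ih => simp [liftL, ih]

theorem liftL_append {V : Type} (c : K4) (L : List V) (z : V) :
    liftL c (L ++ [z]) = liftL c L ++ [(rot^[L.length] c, z)] := by
  induction L generalizing c with
  | nil => rfl
  | cons x r ih => simp [liftL, ih]

theorem rot_sum (c : K4) : c + rot c + rot (rot c) = 0 := by
  revert c; decide

theorem rot_three (c : K4) : rot^[3] c = c := by
  revert c; decide

theorem rot_surj : ∀ a b c d e : K4, [a, b, c, d].Nodup →
    e = a ∨ e = b ∨ e = c ∨ e = d := by
  intro a b c d e h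
  by_contra hc
  have h5 : (e :: [a, b, c, d]).Nodup := List.nodup_cons.2 ⟨by simpa using hc, h⟩
  have := h5.length_le_card
  have hk : Fintype.card K4 = 4 := by decide
  rw [hk] at this
  simp at this

theorem rot_inj : Function.Injective rot := by decide

theorem TPath.lift {V : Type} [AddCommGroup V] {L : List V} (h : TPath L) (c : K4) :
    TPath (liftL c L) := by
  induction h generalizing c with
  | single u => exact TPath.single _
  | cons u v w r h1 _ ih =>
    refine TPath.cons _ _ _ _ ?_ (ih (rot (rot c)))
    ext1
    · exact rot_sum c
    · exact h1

theorem mem_liftL {V : Type} {L : List V} {x : V} (hx : x ∈ L) :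
    ∀ (a b c d e : K4), [a, b, c, d].Nodup →
    (e, x) ∈ liftL a L ∨ (e, x) ∈ liftL b L ∨ (e, x) ∈ liftL c L ∨ (e, x) ∈ liftL d L := by
  induction L with
  | nil => simp at hx
  | cons y r ih =>
    intro a b c d e h
    rcases List.mem_cons.1 hx with rfl | hx
    · rcases rot_surj a b c d e h with rfl | rfl | rfl | rfl <;> simp [liftL]
    · have := ih hx (rot a) (rot b) (rot c) (rot d) e (h.map rot_inj)
      simp only [liftL, List.mem_cons]
      tauto

/-- The list formulation of being sequentially ternary. -/
def Good (V : Type) [AddCommGroup V] (N : ℕ) : Prop :=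
  ∃ L : List V, TPath L ∧ L.length = N ∧ ∀ x, x ≠ 0 → x ∈ L

theorem k4_cases (c : K4) : c = (0,0) ∨ c = (1,0) ∨ c = (0,1) ∨ c = (1,1) := by
  revert c; decide

theorem good_step {V : Type} [AddCommGroup V] (h2 : ∀ x : V, x + x = 0) (j : ℕ)
    (h : Good V (3 * j + 4)) : Good (K4 × V) (4 * (3 * j + 2) + 11) := by
  obtain ⟨L, hL, hlen, hmem⟩ := h
  cases hL with
  | single u => simp at hlen
  | cons a y b r hy hR =>
    obtain ⟨R', z, hz⟩ : ∃ R' z, b :: r = R' ++ [z] :=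
      ⟨(b :: r).dropLast, (b :: r).getLast (by simp), by simp [List.dropLast_append_getLast]⟩
    have hlR : (b :: r).length = 3 * j + 2 := by simp at hlen ⊢; omega
    have hlR' : R'.length = 3 * j + 1 := by
      rw [hz] at hlR; simp at hlR; omega
    have hit : ∀ c, rot^[3 * j + 1] c = rot c := by
      intro c
      rw [Function.iterate_succ_apply, Function.iterate_mul]
      have : (rot^[3]) = id := funext rot_three
      rw [this]; simp
    have hhead : ∀ c, (liftL c (b :: r)).head? = some (c, b) := fun c => rfl
    have hlast : ∀ c, (liftL c (b :: r)).getLast? = some (rot c, z) := by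
      intro c
      rw [hz, liftL_append, hlR', hit]; simp
    have hll : ∀ c, (liftL c (b :: r)).length = 3 * j + 2 := fun c => by
      rw [liftL_length, hlR]
    have hm : ∀ x ∈ b :: r, ∀ e : K4, (e, x) ∈ liftL (0,0) (b :: r) ∨
        (e, x) ∈ liftL (1,0) (b :: r) ∨ (e, x) ∈ liftL (0,1) (b :: r) ∨
        (e, x) ∈ liftL (1,1) (b :: r) := fun x hx e =>
      mem_liftL hx _ _ _ _ e (by decide)
    have hT := fun c => hR.lift c
    have hmem' : ∀ x : V, x ≠ 0 → x = a ∨ x = y ∨ x ∈ b :: r := by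
      intro x hx
      have := hmem x hx
      simpa using this
    clear hmem
    generalize b :: r = R at *
    have hy1 : b + y + a = 0 := by rw [← hy]; abel
    have hy2 : a + b + y = 0 := by rw [← hy]; abel
    have hy3 : y + a + b = 0 := by rw [← hy]; abel
    have d1 : (1 : ZMod 2) + 1 = 0 := by decide
    have p5 := ((hT (0,1)).reverse.join (B := [((1,0),y), ((1,1),0), ((0,1),y)])
        (y := ((1,1),a)) (z := ((1,0),y))
        (TPath.cons _ _ _ _ (by simp [d1, h2]) (TPath.single _)) (x := ((0,1),b))
        (by rw [List.getLast?_reverse]; exact hhead _) rfl (by simp [d1, ← hy]; abel)).join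
        (y := ((1,0),a)) (hT (1,1)) (x := ((0,1),y)) (by simp) (hhead _)
        (by simp [d1, hy3])
    have p4 := (hT (1,0)).join (y := ((1,0),0)) p5 (hlast _) (z := (rot (0,1), z))
        (by simp [hlast]) (by simp [rot, h2, d1])
    have p2 := ((hT (0,0)).reverse.join (B := [((0,0),a), ((0,1),0), ((0,1),a)])
        (y := ((0,0),y)) (z := ((0,0),a))
        (TPath.cons _ _ _ _ (by simp [d1, h2]) (TPath.single _)) (x := ((0,0),b))
        (by rw [List.getLast?_reverse]; exact hhead _) rfl (by simp [hy1])).join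
        (y := ((1,1),y)) p4 (x := ((0,1),a)) (by simp) (z := ((1,0),b))
        (by simp [hhead]) (by simp [d1, ← hy])
    refine ⟨_, p2, ?_, ?_⟩
    · simp [hll]; omega
    · rintro ⟨c, x⟩ hx
      by_cases hx0 : x = 0
      · subst hx0
        rcases k4_cases c with rfl | rfl | rfl | rfl
        · exact absurd rfl hx
        all_goals simp
      · rcases hmem' x hx0 with rfl | rfl | hx1
        · rcases k4_cases c with rfl | rfl | rfl | rfl <;> simp
        · rcases k4_cases c with rfl | rfl | rfl | rfl <;> simp
        · have := hm x hx1 c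
          simp only [List.mem_append, List.mem_cons, List.mem_reverse]
          tauto

/-- Prepending two coordinates. -/
def consHom (n : ℕ) : K4 × (Fin n → ZMod 2) →+ (Fin (n + 2) → ZMod 2) where
  toFun p := Fin.cons p.1.1 (Fin.cons p.1.2 p.2 : Fin (n + 1) → ZMod 2)
  map_zero' := by
    funext i
    refine Fin.cases rfl (fun i => ?_) i
    refine Fin.cases rfl (fun i => rfl) i
  map_add' p q := by
    funext i
    refine Fin.cases rfl (fun i => ?_) i
    refine Fin.cases rfl (fun i => rfl) i

theorem consHom_surj (n : ℕ) : Function.Surjective (consHom n) := by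
  intro v
  refine ⟨((v 0, v 1), fun i => v i.succ.succ), ?_⟩
  funext i
  refine Fin.cases rfl (fun i => ?_) i
  refine Fin.cases rfl (fun i => rfl) i

theorem good_step' (n j : ℕ) (h : Good (Fin n → ZMod 2) (3 * j + 4)) :
    Good (Fin (n + 2) → ZMod 2) (4 * (3 * j + 2) + 11) := by
  obtain ⟨L, hL, hlen, hmem⟩ := good_step (fun x => by
    funext i; exact CharTwo.add_self_eq_zero (x i)) j h
  refine ⟨L.map (consHom n), hL.map _, by simpa using hlen, ?_⟩
  intro x hx
  obtain ⟨p, rfl⟩ := consHom_surj n x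
  exact List.mem_map_of_mem (hmem p (by rintro rfl; exact hx (map_zero _)))

/-- Binary expansion of a number as a vector of length five. -/
def vec5 (k : ℕ) : Fin 5 → ZMod 2 := fun i => if k.testBit i then 1 else 0

theorem good_base : Good (Fin 5 → ZMod 2) 31 := by
  refine ⟨[1, 3, 2, 6, 4, 12, 8, 13, 5, 21, 16, 23, 7, 31, 24, 17, 9, 27, 18, 28, 14, 26, 20, 30,
    10, 19, 25, 15, 22, 29, 11].map vec5, ?_, rfl, ?_⟩
  · simp only [List.map]
    repeat' first
      | exact TPath.single _
      | refine TPath.cons _ _ _ _ (by decide) ?_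
  · decide

theorem good_all (k : ℕ) :
    ∃ j, 2 ^ (2 * k + 5) - 1 = 3 * j + 4 ∧ Good (Fin (2 * k + 5) → ZMod 2) (3 * j + 4) := by
  induction k with
  | zero => exact ⟨9, by norm_num, good_base⟩
  | succ k ih =>
    obtain ⟨j, hj, hg⟩ := ih
    refine ⟨4 * j + 5, ?_, ?_⟩
    · have : 2 ^ (2 * (k + 1) + 5) = 4 * 2 ^ (2 * k + 5) := by ring
      omega
    · have := good_step' _ _ hg
      have e : 4 * (3 * j + 2) + 11 = 3 * (4 * j + 5) + 4 := by ring
      rw [e] at this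
      exact this

theorem good_seq (n : ℕ) (h : Good (Fin n → ZMod 2) (2 ^ n - 1)) : SeqTernary n := by
  obtain ⟨L, hL, hlen, hmem⟩ := h
  have hsub : (Finset.univ.erase (0 : Fin n → ZMod 2)) ⊆ L.toFinset := by
    intro x hx
    simpa using hmem x (Finset.ne_of_mem_erase hx)
  have hc : (Finset.univ.erase (0 : Fin n → ZMod 2)).card = 2 ^ n - 1 := by
    rw [Finset.card_erase_of_mem (Finset.mem_univ _)]; simp
  have hle : L.toFinset.card ≤ 2 ^ n - 1 := hlen ▸ L.toFinset_card_le
  have heq := Finset.eq_of_subset_of_card_le hsub (by rw [hc]; exact hle)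
  have hnd : L.Nodup := by
    have : L.toFinset.card = L.length := by rw [← heq, hc, hlen]
    exact (Multiset.toFinset_card_eq_card_iff_nodup (m := (L : Multiset (Fin n → ZMod 2)))).1 this
  have h0 : ∀ x ∈ L, x ≠ 0 := by
    intro x hx
    have : x ∈ L.toFinset := by simpa using hx
    rw [← heq] at this
    exact Finset.ne_of_mem_erase this
  refine ⟨fun i => L.getD (i - 1) 0, ⟨?_, ?_, ?_⟩, ?_⟩
  · rintro i ⟨h1, h2⟩
    have hi : i - 1 < L.length := by omega
    simp only [Set.mem_ofPred_eq, List.getD_eq_getElem _ _ hi]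
    exact h0 _ (List.getElem_mem hi)
  · rintro i ⟨h1, h2⟩ k ⟨h3, h4⟩ hik
    have hi : i - 1 < L.length := by omega
    have hk : k - 1 < L.length := by omega
    simp only [List.getD_eq_getElem _ _ hi, List.getD_eq_getElem _ _ hk] at hik
    have := (hnd.getElem_inj_iff).1 hik
    omega
  · intro x hx
    obtain ⟨i, hi, rfl⟩ := List.getElem_of_mem (hmem x hx)
    refine ⟨i + 1, ⟨by omega, by omega⟩, ?_⟩
    exact List.getD_eq_getElem _ _ hi
  · rintro i h1 h2 ⟨k, hk⟩
    have := hL.get (k - 1) (by omega)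
    have e1 : 2 * (k - 1) = i - 1 - 1 := by omega
    have e2 : i - 1 - 1 + 1 = i - 1 := by omega
    have e3 : i - 1 - 1 + 2 = i + 1 - 1 := by omega
    rw [e1, e2, e3] at this
    exact this

theorem stmt17 (n : ℕ) (hn : 5 ≤ n) (hodd : Odd n) : SeqTernary n := by
  obtain ⟨m, rfl⟩ := hodd
  obtain ⟨k, rfl⟩ : ∃ k, m = k + 2 := ⟨m - 2, by omega⟩
  obtain ⟨j, hj, hg⟩ := good_all k
  have e : 2 * (k + 2) + 1 = 2 * k + 5 := by ring
  rw [e]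
  apply good_seq
  rw [hj]
  exact hg
end

section
/- For any integers n ≥ 6 with n even, (ℤ/2ℤ)^n is sequentially ternary. -/
namespace TernAux

/-- Surjective enumerations of the nonzero elements by `1, …, Q - 1`. -/
def Good {V : Type} [AddCommGroup V] (Q : ℕ) (v : ℕ → V) : Prop :=
  (∀ i, 1 ≤ i → i < Q → v i ≠ 0) ∧
  (∀ x, x ≠ 0 → ∃ i, 1 ≤ i ∧ i < Q ∧ v i = x) ∧
  ∀ i, 2 ≤ i → i + 2 ≤ Q → i % 2 = 0 → v (i - 1) + v i + v (i + 1) = 0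

abbrev F4 := ZMod 2 × ZMod 2

/-- multiplication by `1`, `ω`, `ω²` according to the position. -/
def lam (j : ℕ) (t : F4) : F4 :=
  if j % 2 = 0 then t else if j % 4 = 1 then (t.2, t.1 + t.2) else (t.1 + t.2, t.1)

lemma lam_even {j : ℕ} (h : j % 2 = 0) (t : F4) : lam j t = t := by simp [lam, h]
lemma lam_one {j : ℕ} (h : j % 4 = 1) (t : F4) : lam j t = (t.2, t.1 + t.2) := by
  have : j % 2 = 1 := by omega
  simp [lam, h, this]
lemma lam_three {j : ℕ} (h : j % 4 = 3) (t : F4) : lam j t = (t.1 + t.2, t.1) := by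
  have : j % 2 = 1 := by omega
  simp [lam, h, this]

def tt (b : ℕ) : F4 := if b = 0 then (0,0) else if b = 1 then (1,0) else if b = 2 then (1,1) else (0,1)
def cc (b : ℕ) : F4 := if b = 1 then (1,1) else if b = 2 then (0,1) else (1,0)

/-- swap `1` and `2`. -/
def sw (j : ℕ) : ℕ := if j = 1 then 2 else if j = 2 then 1 else j

/-- The position used in block `b` at offset `r`. -/
def gg (Q b r : ℕ) : ℕ :=
  if b = 0 then r
  else if b = 1 then sw (Q - r)
  else if b = 2 then Q - sw (Q - sw r)
  else Q - sw r

lemma gg_zero (Q r : ℕ) : gg Q 0 r = r := by simp [gg]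
lemma gg_one (Q r : ℕ) : gg Q 1 r = sw (Q - r) := by simp [gg]
lemma gg_two (Q r : ℕ) : gg Q 2 r = Q - sw (Q - sw r) := by simp [gg]
lemma gg_three (Q r : ℕ) : gg Q 3 r = Q - sw r := by simp [gg]

lemma sw_one : sw 1 = 2 := rfl
lemma sw_two : sw 2 = 1 := rfl
lemma sw_of {j : ℕ} (h1 : j ≠ 1) (h2 : j ≠ 2) : sw j = j := by simp [sw, h1, h2]
lemma sw_spec (j : ℕ) : (j = 1 ∧ sw j = 2) ∨ (j = 2 ∧ sw j = 1) ∨ (j ≠ 1 ∧ j ≠ 2 ∧ sw j = j) := by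
  by_cases h1 : j = 1
  · left; exact ⟨h1, by rw [h1, sw_one]⟩
  · by_cases h2 : j = 2
    · right; left; exact ⟨h2, by rw [h2, sw_two]⟩
    · right; right; exact ⟨h1, h2, sw_of h1 h2⟩

lemma sw_range {Q j : ℕ} (hQ : 8 ≤ Q) (h1 : 1 ≤ j) (h2 : j < Q) : 1 ≤ sw j ∧ sw j < Q := by
  have := sw_spec j; omega

lemma sw_sw (j : ℕ) : sw (sw j) = j := by
  rcases sw_spec j with ⟨h, h'⟩ | ⟨h, h'⟩ | ⟨h, h', h3⟩
  · rw [h', h, sw_two]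
  · rw [h', h, sw_one]
  · rw [h3, h3]

lemma gg_range {Q b r : ℕ} (hQ : 8 ≤ Q) (hb : b < 4) (h1 : 1 ≤ r) (h2 : r < Q) :
    1 ≤ gg Q b r ∧ gg Q b r < Q := by
  have hb' : b = 0 ∨ b = 1 ∨ b = 2 ∨ b = 3 := by omega
  have hr := sw_range hQ h1 h2
  rcases hb' with rfl | rfl | rfl | rfl
  · rw [gg_zero]; omega
  · rw [gg_one]; exact sw_range hQ (by omega) (by omega)
  · rw [gg_two]
    have := sw_range (j := Q - sw r) hQ (by omega) (by omega)
    omega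
  · rw [gg_three]; omega

lemma gg_invol {Q b r : ℕ} (hQ : 8 ≤ Q) (hb : b < 4) (h1 : 1 ≤ r) (h2 : r < Q) :
    ∃ s, 1 ≤ s ∧ s < Q ∧ gg Q b s = r := by
  have hb' : b = 0 ∨ b = 1 ∨ b = 2 ∨ b = 3 := by omega
  have hr := sw_range hQ h1 h2
  have hr' := sw_range (j := Q - r) hQ (by omega) (by omega)
  rcases hb' with rfl | rfl | rfl | rfl
  · exact ⟨r, h1, h2, gg_zero _ _⟩
  · refine ⟨Q - sw r, by omega, by omega, ?_⟩
    rw [gg_one, Nat.sub_sub_self (by omega), sw_sw]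
  · have h3 := sw_range (j := Q - sw (Q - r)) hQ (by omega) (by omega)
    refine ⟨sw (Q - sw (Q - r)), by omega, by omega, ?_⟩
    rw [gg_two, sw_sw, Nat.sub_sub_self (by omega), sw_sw, Nat.sub_sub_self (by omega)]
  · refine ⟨sw (Q - r), by omega, by omega, ?_⟩
    rw [gg_three, sw_sw, Nat.sub_sub_self (by omega)]

/-- Each triple of a block is, up to order, a triple of the original sequence. -/
lemma gg_triple {Q b r : ℕ} (hb : b < 4) (hQ2 : Q % 4 = 0) (h1 : 2 ≤ r) (h2 : r + 2 ≤ Q)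
    (hr : r % 2 = 0) {W : Type} [AddCommGroup W] (E : ℕ → W)
    (hE : ∀ i, 2 ≤ i → i + 2 ≤ Q → i % 2 = 0 → E (i - 1) + E i + E (i + 1) = 0) :
    E (gg Q b (r - 1)) + E (gg Q b r) + E (gg Q b (r + 1)) = 0 := by
  -- `sw` on a triple
  have swt : ∀ i, 2 ≤ i → i % 2 = 0 → ∀ G : ℕ → W,
      G (sw (i - 1)) + G (sw i) + G (sw (i + 1)) = G (i - 1) + G i + G (i + 1) := by
    intro i hi he G
    by_cases h : i = 2
    · subst h
      rw [sw_of (j := 2 + 1) (by omega) (by omega), sw_two, show 2 - 1 = 1 from rfl, sw_one]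
      abel
    · rw [sw_of (j := i - 1) (by omega) (by omega), sw_of (j := i) (by omega) (by omega),
        sw_of (j := i + 1) (by omega) (by omega)]
  have rev : ∀ i, 2 ≤ i → i + 2 ≤ Q → ∀ G : ℕ → W,
      G (Q - (i - 1)) + G (Q - i) + G (Q - (i + 1))
        = G (Q - i - 1) + G (Q - i) + G (Q - i + 1) := by
    intro i hi he G
    rw [show Q - (i - 1) = Q - i + 1 by omega, show Q - (i + 1) = Q - i - 1 by omega]
    abel
  have hb' : b = 0 ∨ b = 1 ∨ b = 2 ∨ b = 3 := by omega
  rcases hb' with rfl | rfl | rfl | rfl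
  · simp only [gg_zero]; exact hE r h1 h2 hr
  · simp only [gg_one]
    rw [rev r h1 h2 (fun j => E (sw j)), swt (Q - r) (by omega) (by omega)]
    exact hE _ (by omega) (by omega) (by omega)
  · simp only [gg_two]
    rw [swt r h1 hr (fun j => E (Q - sw (Q - j))), rev r h1 h2 (fun j => E (Q - sw j)),
      swt (Q - r) (by omega) (by omega) (fun j => E (Q - j)),
      rev (Q - r) (by omega) (by omega) E]
    exact hE _ (by omega) (by omega) (by omega)
  · simp only [gg_three]
    rw [swt r h1 hr (fun j => E (Q - j)), rev r h1 h2 E]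
    exact hE _ (by omega) (by omega) (by omega)

lemma f4_triple (t : F4) (i : ℕ) (h1 : 2 ≤ i) (h : i % 2 = 0) :
    lam (i - 1) t + lam i t + lam (i + 1) t = 0 := by
  rw [lam_even h]
  have : i % 4 = 0 ∨ i % 4 = 2 := by omega
  rcases this with h4 | h4
  · rw [lam_three (j := i - 1) (by omega), lam_one (j := i + 1) (by omega)]
    revert t; decide
  · rw [lam_one (j := i - 1) (by omega), lam_three (j := i + 1) (by omega)]
    revert t; decide

lemma lam_surj (j : ℕ) (y : F4) : ∃ b, b < 4 ∧ lam j (tt b) = y := by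
  have : j % 2 = 0 ∨ j % 4 = 1 ∨ j % 4 = 3 := by omega
  rcases this with h | h | h
  · simp only [lam_even h]; revert y; decide
  · simp only [lam_one h]; revert y; decide
  · simp only [lam_three h]; revert y; decide

/-- Value at position `j` of the lift number `b`. -/
def EE {V : Type} (v : ℕ → V) (b j : ℕ) : V × F4 := (v j, lam j (tt b))

def ww {V : Type} [AddCommGroup V] (Q : ℕ) (v : ℕ → V) (p : ℕ) : V × F4 :=
  if p % Q = 0 then (0, cc (p / Q)) else EE v (p / Q) (gg Q (p / Q) (p % Q))

lemma ww_mul {V : Type} [AddCommGroup V] {Q : ℕ} (hQ : 8 ≤ Q) (v : ℕ → V) (b : ℕ) :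
    ww Q v (b * Q) = (0, cc b) := by
  simp [ww, Nat.mul_div_cancel b (show 0 < Q by omega)]

lemma ww_add {V : Type} [AddCommGroup V] {Q : ℕ} (v : ℕ → V) (b r : ℕ)
    (h1 : 1 ≤ r) (h2 : r < Q) : ww Q v (b * Q + r) = EE v b (gg Q b r) := by
  have e1 : (b * Q + r) % Q = r := by
    rw [mul_comm, Nat.mul_add_mod, Nat.mod_eq_of_lt h2]
  have e2 : (b * Q + r) / Q = b := by
    rw [mul_comm, Nat.mul_add_div (by omega), Nat.div_eq_of_lt h2, add_zero]
  have : r ≠ 0 := by omega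
  simp [ww, e1, e2, this]

lemma good_step {V : Type} [AddCommGroup V] (hV : ∀ x : V, x + x = 0) {Q : ℕ} (hQ : 8 ≤ Q)
    (hQ4 : Q % 4 = 0) {v : ℕ → V} (hv : Good Q v) : Good (4 * Q) (ww Q v) := by
  obtain ⟨hne, hsurj, htri⟩ := hv
  have split : ∀ p, 1 ≤ p → p < 4 * Q → ∃ b r, b < 4 ∧ r < Q ∧ p = b * Q + r := by
    intro p _ h2
    refine ⟨p / Q, p % Q, ?_, Nat.mod_lt _ (by omega), ?_⟩
    · exact Nat.div_lt_of_lt_mul (by linarith)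
    · exact (Nat.div_add_mod' p Q).symm
  refine ⟨?_, ?_, ?_⟩
  · intro p h1 h2
    obtain ⟨b, r, hb, hr, rfl⟩ := split p h1 h2
    rcases Nat.eq_zero_or_pos r with rfl | hr0
    · rw [add_zero, ww_mul hQ]
      intro h
      have := congrArg Prod.snd h
      simp only [Prod.snd_zero] at this
      revert this
      clear h h1 h2
      revert b; decide
    · rw [ww_add v b r hr0 hr]
      intro h
      have hg := gg_range (b := b) hQ hb hr0 hr
      exact hne _ hg.1 hg.2 (congrArg Prod.fst h)
  · rintro ⟨x, y⟩ hxy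
    by_cases hx : x = 0
    · subst hx
      have hy : y ≠ 0 := fun h => hxy (by rw [h]; rfl)
      have : ∃ b, b < 4 ∧ 1 ≤ b ∧ cc b = y := by
        clear hxy; revert y; decide
      obtain ⟨b, hb, hb1, rfl⟩ := this
      refine ⟨b * Q, by nlinarith, by nlinarith, ww_mul hQ v b⟩
    · obtain ⟨j, j1, j2, rfl⟩ := hsurj x hx
      obtain ⟨b, hb, rfl⟩ := lam_surj j y
      obtain ⟨s, s1, s2, hs⟩ := gg_invol hQ hb j1 j2
      refine ⟨b * Q + s, by omega, by nlinarith, ?_⟩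
      rw [ww_add v b s s1 s2, hs, EE]
  · intro p h1 h2 hp
    obtain ⟨b, r, hb, hr, rfl⟩ := split p (by omega) (by omega)
    have hbQ : (b * Q) % 2 = 0 := by
      rw [Nat.mul_mod, show Q % 2 = 0 by omega]; simp
    rcases Nat.eq_zero_or_pos r with rfl | hr0
    · have hb1 : 1 ≤ b := by
        rcases Nat.eq_zero_or_pos b with rfl | h
        · simp at h1
        · exact h
      obtain ⟨c, rfl⟩ : ∃ c, b = c + 1 := ⟨b - 1, by omega⟩
      have e : (c + 1) * Q + 0 - 1 = c * Q + (Q - 1) := by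
        rw [add_mul]; omega
      rw [e, add_zero, ww_mul hQ, ww_add v c (Q - 1) (by omega) (by omega),
        ww_add v (c + 1) 1 (by omega) (by omega)]
      have hc : c = 0 ∨ c = 1 ∨ c = 2 := by omega
      have q1 : Q - (Q - 1) = 1 := by omega
      have q2 : Q - 1 ≠ 1 := by omega
      have q3 : Q - 1 ≠ 2 := by omega
      have q4 : Q - 2 ≠ 1 := by omega
      have q5 : Q - 2 ≠ 2 := by omega
      have q6 : Q - (Q - 2) = 2 := by omega
      rcases hc with rfl | rfl | rfl
      · have g1 : gg Q 0 (Q - 1) = Q - 1 := by simp [gg]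
        have g2 : gg Q (0 + 1) 1 = Q - 1 := by simp [gg, sw, q2, q3]
        rw [g1, g2, EE, EE, lam_three (by omega), lam_three (by omega)]
        ext1
        · simp [hV]
        · simp only [Prod.snd_add, Prod.snd_zero]; decide
      · have g1 : gg Q 1 (Q - 1) = 2 := by simp [gg, sw, q1]
        have g2 : gg Q (1 + 1) 1 = 2 := by simp [gg, sw, q4, q5, q6]
        rw [g1, g2, EE, EE, lam_even (by omega), lam_even (by omega)]
        ext1
        · simp [hV]
        · simp only [Prod.snd_add, Prod.snd_zero]; decide
      · have g1 : gg Q 2 (Q - 1) = Q - 2 := by simp [gg, sw, q1, q2, q3]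
        have g2 : gg Q (2 + 1) 1 = Q - 2 := by simp [gg, sw]
        rw [g1, g2, EE, EE, lam_even (by omega), lam_even (by omega)]
        ext1
        · simp [hV]
        · simp only [Prod.snd_add, Prod.snd_zero]; decide
    · have hr2 : r % 2 = 0 := by omega
      rw [show b * Q + r - 1 = b * Q + (r - 1) by omega, add_assoc (b * Q) r 1,
        ww_add v b _ (by omega) (by omega), ww_add v b _ (by omega) (by omega),
        ww_add v b _ (by omega) (by omega)]
      apply gg_triple hb hQ4 (by omega) (by omega) hr2 (EE v b)
      intro i i1 i2 i3
      ext1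
      · exact htri i i1 i2 i3
      · exact f4_triple (tt b) i i1 i3

/-- Passage from `V × F4` to `Fin (n + 2) → ZMod 2`. -/
def put {n : ℕ} (x : (Fin n → ZMod 2) × F4) : Fin (n + 2) → ZMod 2 :=
  Matrix.vecCons x.2.1 (Matrix.vecCons x.2.2 x.1)

lemma put_add {n : ℕ} (x y : (Fin n → ZMod 2) × F4) : put (x + y) = put x + put y := by
  simp [put]

lemma put_zero {n : ℕ} : put (0 : (Fin n → ZMod 2) × F4) = 0 := by
  simp [put]

lemma put_surj {n : ℕ} (y : Fin (n + 2) → ZMod 2) : ∃ x, put x = y :=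
  ⟨(Matrix.vecTail (Matrix.vecTail y), (y 0, y 1)), by
    funext i
    refine Fin.cases rfl (fun i => Fin.cases rfl (fun i => rfl) i) i⟩

lemma put_inj {n : ℕ} {x : (Fin n → ZMod 2) × F4} (h : put x = 0) : x = 0 := by
  obtain ⟨x, a, b⟩ := x
  have h0 : a = 0 := congrFun h 0
  have h1 : b = 0 := congrFun h 1
  have h2 : x = 0 := by
    funext i
    exact congrFun h i.succ.succ
  rw [h0, h1, h2]; rfl

lemma good_put {n Q : ℕ} {v : ℕ → (Fin n → ZMod 2) × F4} (h : Good Q v) :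
    Good Q (fun i => put (v i)) := by
  obtain ⟨h1, h2, h3⟩ := h
  refine ⟨fun i a b c => h1 i a b (put_inj c), ?_, ?_⟩
  · intro y hy
    obtain ⟨x, rfl⟩ := put_surj y
    obtain ⟨i, a, b, rfl⟩ := h2 x (fun h => hy (by rw [h, put_zero]))
    exact ⟨i, a, b, rfl⟩
  · intro i a b c
    rw [← put_add, ← put_add, h3 i a b c, put_zero]

def baseList : List ℕ := [0, 1, 30, 31, 43, 52, 5, 49, 51, 2, 45, 47, 12, 35, 4, 39, 41, 14, 57, 55,
  17, 38, 26, 60, 42, 22, 50, 36, 54, 18, 7, 21, 40, 61, 46, 19, 44, 63, 10, 53, 58, 15, 24, 23, 11,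
  28, 8, 20, 9, 29, 13, 16, 48, 32, 59, 27, 37, 62, 6, 56, 25, 33, 34, 3]

def bits (m : ℕ) : Fin 6 → ZMod 2 := fun k => ((m / 2 ^ (k : ℕ) : ℕ) : ZMod 2)

def base (i : ℕ) : Fin 6 → ZMod 2 := bits (baseList.getD i 0)

set_option maxRecDepth 100000 in
set_option maxHeartbeats 4000000 in
lemma base_good : Good 64 base := by
  refine ⟨?_, ?_, ?_⟩
  · have : ∀ i < 64, 1 ≤ i → base i ≠ 0 := by decide +kernel
    exact fun i a b => this i b a
  · have : ∀ x : Fin 6 → ZMod 2, x ≠ 0 → ∃ i, i < 64 ∧ 1 ≤ i ∧ base i = x := by decide +kernel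
    intro x hx
    obtain ⟨i, a, b, c⟩ := this x hx
    exact ⟨i, b, a, c⟩
  · have : ∀ i < 63, 2 ≤ i → i % 2 = 0 → base (i - 1) + base i + base (i + 1) = 0 := by
      decide +kernel
    exact fun i a b c => this i (by omega) a c

lemma exists_good (k : ℕ) : ∃ v : ℕ → (Fin (6 + 2 * k) → ZMod 2), Good (2 ^ (6 + 2 * k)) v := by
  induction k with
  | zero => exact ⟨base, base_good⟩
  | succ k ih =>
    obtain ⟨v, hv⟩ := ih
    have e : 2 ^ (6 + 2 * k) = 64 * 2 ^ (2 * k) := by rw [pow_add]; norm_num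
    have hpos : 0 < 2 ^ (2 * k) := by positivity
    have h := good_put (good_step (fun x => by funext i; exact CharTwo.add_self_eq_zero _)
      (by omega) (by omega) hv)
    have e2 : 4 * 2 ^ (6 + 2 * k) = 2 ^ (6 + 2 * (k + 1)) := by
      rw [show 6 + 2 * (k + 1) = (6 + 2 * k) + 2 by ring, pow_add]; ring
    rw [e2] at h
    exact ⟨_, h⟩

lemma good_seq {n : ℕ} {v : ℕ → (Fin n → ZMod 2)} (hv : Good (2 ^ n) v) : SeqTernary n := by
  obtain ⟨h1, h2, h3⟩ := hv
  have hpos : 0 < 2 ^ n := by positivity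
  have maps : Set.MapsTo v (Set.Icc 1 (2 ^ n - 1)) {x | x ≠ 0} := by
    intro i hi
    exact h1 i hi.1 (by have := hi.2; omega)
  have surj : Set.SurjOn v (Set.Icc 1 (2 ^ n - 1)) {x | x ≠ 0} := by
    intro x hx
    obtain ⟨i, a, b, c⟩ := h2 x hx
    exact ⟨i, ⟨a, by omega⟩, c⟩
  refine ⟨v, ⟨maps, ?_, surj⟩, ?_⟩
  · have := Finset.injOn_of_surjOn_of_card_le (s := Finset.Icc 1 (2 ^ n - 1))
      (t := Finset.univ.erase (0 : Fin n → ZMod 2)) v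
      (by intro i hi; simpa using maps (by simpa using hi))
      (by intro x hx; simpa using surj (by simpa using hx))
      (by simp [Finset.card_erase_of_mem])
    simpa using this
  · intro i a b c
    exact h3 i a (by omega) (Nat.even_iff.mp c)

end TernAux

theorem stmt18 (n : ℕ) (hn : 6 ≤ n) (heven : Even n) : SeqTernary n := by
  obtain ⟨m, hm⟩ := heven
  obtain ⟨k, rfl⟩ : ∃ k, n = 6 + 2 * k := ⟨m - 3, by omega⟩
  obtain ⟨v, hv⟩ := TernAux.exists_good k
  exact TernAux.good_seq hv
end
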